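/- arXiv:2411.02573 — 2 statements merged into one kernel-verified Lean document; each statement's English description precedes it below -/
import Mathlib

section
/- Continuous-time convergence of the circuit flow to a primal–dual solution (Theorem 2). Let f: ℝ^m → ℝ be μ-strongly convex and M-smooth (0 < μ ≤ M < ∞). Let a dynamic interconnect be given by a matrix A ∈ ℝ^{(τ−1)×σ} (τ ≥ m+1), a partition of {1,…,σ} into ℛ, ℒ, 𝒞, and diagonal matrices D_ℛ, D_ℒ, D_𝒞 with strictly positive diagonal entries, and assume it is admissible with respect to a selection matrix E ∈ ℝ^{n×m}. Let (x⋆, y⋆) be a primal–dual solution pair, i.e., y⋆ = ∇f(x⋆), x⋆ ∈ ℛ(Eᵀ), y⋆ ∈ 𝒩(E). Let (v, i, x, y): [0,∞) → ℝ^σ × ℝ^σ × ℝ^m × ℝ^m be a Lipschitz-continuous curve such that for every t ≥ 0: y(t) = ∇f(x(t)), A i(t) = (−y(t); 0), v(t) = Aᵀ(x(t); e(t)) for some e(t) ∈ ℝ^{τ−1−m}, v_ℛ(t) = D_ℛ i_ℛ(t); and for almost every t > 0: v_ℒ(t) = D_ℒ (d/dt) i_ℒ(t), i_𝒞(t) =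 D_𝒞 (d/dt) v_𝒞(t). Then lim_{t→∞} x(t) = x⋆ and lim_{t→∞} y(t) = y⋆. -/
open Matrix MeasureTheory

/-- The continuous linear map `h ↦ ⟨g, h⟩` on `ℝ^m` (Euclidean inner product). -/
noncomputable def dotCLM {m : ℕ} (g : Fin m → ℝ) : (Fin m → ℝ) →L[ℝ] ℝ :=
  ∑ k, g k • ContinuousLinearMap.proj k

/-- `g` is the (Euclidean) gradient of `f` everywhere. -/
def HasGradient {m : ℕ} (f : (Fin m → ℝ) → ℝ) (g : (Fin m → ℝ) → Fin m → ℝ) : Prop :=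
  ∀ x, HasFDerivAt f (dotCLM (g x)) x

/-- `f` is `μ`-strongly convex: `f − (μ/2)‖·‖²` is convex. -/
def StronglyConvexFun {m : ℕ} (μ : ℝ) (f : (Fin m → ℝ) → ℝ) : Prop :=
  ConvexOn ℝ Set.univ (fun x => f x - μ / 2 * (x ⬝ᵥ x))

/-- The gradient `g` is `M`-Lipschitz (squared Euclidean form). -/
def GradLipschitz {m : ℕ} (M : ℝ) (g : (Fin m → ℝ) → Fin m → ℝ) : Prop :=
  ∀ x z : Fin m → ℝ, (g x - g z) ⬝ᵥ (g x - g z) ≤ M ^ 2 * ((x - z) ⬝ᵥ (x - z))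

/-- Membership `(v, i) ∈ D_{x,y}` (equilibrium relations of the interconnect). -/
def MemDxy {m p σ : ℕ} (A : Matrix (Fin m ⊕ Fin p) (Fin σ) ℝ)
    (Rset Lset Cset : Finset (Fin σ)) (dR : Fin σ → ℝ)
    (x y : Fin m → ℝ) (v i : Fin σ → ℝ) : Prop :=
  (∃ e : Fin p → ℝ,
      A.mulVec i = Sum.elim (fun a => -(y a)) (fun _ => (0 : ℝ)) ∧
      v = A.transpose.mulVec (Sum.elim x e)) ∧
  (∀ j ∈ Rset, v j = dR j * i j) ∧
  (∀ j ∈ Lset, v j = 0) ∧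
  (∀ j ∈ Cset, i j = 0)

/-- `E` is a selection matrix. -/
def IsSelectionMatrix {n m : ℕ} (E : Matrix (Fin n) (Fin m) ℝ) : Prop :=
  ∃ netOf : Fin m → Fin n, Function.Surjective netOf ∧
    ∀ i j, E i j = if netOf j = i then 1 else 0

/-- Admissibility of the dynamic interconnect with respect to `E`. -/
def AdmissibleInterconnect {m p σ n : ℕ} (A : Matrix (Fin m ⊕ Fin p) (Fin σ) ℝ)
    (Rset Lset Cset : Finset (Fin σ)) (dR : Fin σ → ℝ)
    (E : Matrix (Fin n) (Fin m) ℝ) : Prop :=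
  ∀ x y : Fin m → ℝ,
    (∃ v i : Fin σ → ℝ, MemDxy A Rset Lset Cset dR x y v i) ↔
      ((∃ z : Fin n → ℝ, x = E.transpose.mulVec z) ∧ E.mulVec y = 0)

/-!
Kirchhoff's laws are linear, so the difference between the trajectory and an equilibrium
`(v⋆, i⋆, x⋆, y⋆)` of the interconnect obeys them too, and Tellegen's theorem reads
`⟨v - v⋆, i - i⋆⟩ = -⟨x - x⋆, y - y⋆⟩`.  The energy stored by this difference in the inductors and
capacitors therefore decays at rate at least `⟨x - x⋆, ∇f(x) - ∇f(x⋆)⟩ ≥ μ ‖x - x⋆‖²`, since the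
resistors only dissipate.  As the energy is nonnegative, `‖x - x⋆‖²` is integrable on `(0, ∞)`, and
a uniformly continuous curve with this property tends to `x⋆` (Barbalat).
-/

open Set Filter
open scoped Topology

section Gradient

variable {m : ℕ}

lemma dotCLM_apply (g h : Fin m → ℝ) : dotCLM g h = g ⬝ᵥ h := by
  simp [dotCLM, dotProduct]

lemma hasGradient_half_mul_dotProduct_self (μ : ℝ) :
    HasGradient (fun x : Fin m → ℝ => μ / 2 * (x ⬝ᵥ x)) (fun x => μ • x) := by
  intro x
  have hcoord (k : Fin m) : HasFDerivAt (fun x : Fin m → ℝ => x k)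
      (ContinuousLinearMap.proj k : (Fin m → ℝ) →L[ℝ] ℝ) x := hasFDerivAt_apply k x
  refine ((HasFDerivAt.fun_sum fun k _ => (hcoord k).mul (hcoord k)).const_mul (μ / 2)).congr_fderiv
    (ContinuousLinearMap.ext fun h => ?_)
  simp only [_root_.smul_apply, _root_.sum_apply, _root_.add_apply,
    ContinuousLinearMap.proj_apply, dotCLM_apply, dotProduct,
    Pi.smul_apply, smul_eq_mul, Finset.mul_sum]
  exact Finset.sum_congr rfl fun k _ => by ring

lemma HasGradient.sub {f₁ f₂ : (Fin m → ℝ) → ℝ} {g₁ g₂ : (Fin m → ℝ) → Fin m → ℝ}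
    (h₁ : HasGradient f₁ g₁) (h₂ : HasGradient f₂ g₂) :
    HasGradient (fun x => f₁ x - f₂ x) (fun x => g₁ x - g₂ x) := fun x =>
  ((h₁ x).sub (h₂ x)).congr_fderiv <| ContinuousLinearMap.ext fun h => by
    simp only [_root_.sub_apply, dotCLM_apply, sub_dotProduct]

lemma fderiv_apply_sub_le_of_convexOn_univ {E : Type*} [NormedAddCommGroup E] [NormedSpace ℝ E]
    {f : E → ℝ} {f' : E → E →L[ℝ] ℝ} (hconv : ConvexOn ℝ univ f)
    (hf : ∀ x, HasFDerivAt f (f' x) x) (x z : E) : f' z (x - z) ≤ f' x (x - z) := by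
  have hline (s : ℝ) : HasDerivAt (f ∘ AffineMap.lineMap z x)
      (f' (AffineMap.lineMap z x s) (x - z)) s :=
    (hf _).comp_hasDerivAt s AffineMap.hasDerivAt_lineMap
  have hconv_line : ConvexOn ℝ univ (f ∘ AffineMap.lineMap (k := ℝ) z x) :=
    hconv.comp_affineMap (AffineMap.lineMap z x)
  have hle := (hconv_line.le_slope_of_hasDerivAt trivial trivial zero_lt_one (hline 0)).trans
    (hconv_line.slope_le_of_hasDerivAt trivial trivial zero_lt_one (hline 1))
  rwa [AffineMap.lineMap_apply_zero, AffineMap.lineMap_apply_one] at hle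

lemma HasGradient.mul_dotProduct_sub_le {f : (Fin m → ℝ) → ℝ} {g : (Fin m → ℝ) → Fin m → ℝ}
    (hg : HasGradient f g) {μ : ℝ} (hf : StronglyConvexFun μ f) (x z : Fin m → ℝ) :
    μ * ((x - z) ⬝ᵥ (x - z)) ≤ (x - z) ⬝ᵥ (g x - g z) := by
  have hmono := fderiv_apply_sub_le_of_convexOn_univ hf
    (hg.sub (hasGradient_half_mul_dotProduct_self μ)) x z
  simp only [dotCLM_apply, sub_dotProduct, smul_dotProduct, smul_eq_mul] at hmono
  rw [dotProduct_comm _ (g x - g z)]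
  simp only [sub_dotProduct]
  linarith

lemma norm_sq_le_dotProduct_self {ι : Type*} [Fintype ι] (w : ι → ℝ) : ‖w‖ ^ 2 ≤ w ⬝ᵥ w := by
  have hnonneg : 0 ≤ w ⬝ᵥ w := Finset.sum_nonneg fun k _ => mul_self_nonneg (w k)
  rw [← Real.le_sqrt (norm_nonneg w) hnonneg, pi_norm_le_iff_of_nonneg (Real.sqrt_nonneg _)]
  refine fun k => Real.abs_le_sqrt ?_
  rw [sq]
  exact Finset.single_le_sum (f := fun k => w k * w k) (fun j _ => mul_self_nonneg (w j))
    (Finset.mem_univ k)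

lemma GradLipschitz.continuous {M : ℝ} {g : (Fin m → ℝ) → Fin m → ℝ} (hg : GradLipschitz M g) :
    Continuous g := by
  refine continuous_iff_continuousAt.2 fun x => tendsto_sub_nhds_zero_iff.1 ?_
  have hbound (z : Fin m → ℝ) : ‖g z - g x‖ ≤ √(M ^ 2 * ((z - x) ⬝ᵥ (z - x))) :=
    Real.le_sqrt_of_sq_le ((norm_sq_le_dotProduct_self _).trans (hg z x))
  refine squeeze_zero_norm hbound ?_
  have hcont : Continuous fun z : Fin m → ℝ => √(M ^ 2 * ((z - x) ⬝ᵥ (z - x))) := by fun_prop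
  simpa using hcont.tendsto x

end Gradient

section AbsolutelyContinuous

lemma absolutelyContinuousOnInterval_const {X : Type*} [PseudoMetricSpace X] (c : X) (a b : ℝ) :
    AbsolutelyContinuousOnInterval (fun _ => c) a b :=
  (LipschitzWith.const c).lipschitzOnWith.absolutelyContinuousOnInterval

lemma absolutelyContinuousOnInterval_finset_sum {α F : Type*} [SeminormedAddCommGroup F]
    {s : Finset α} {u : α → ℝ → F} {a b : ℝ}
    (h : ∀ j ∈ s, AbsolutelyContinuousOnInterval (u j) a b) :
    AbsolutelyContinuousOnInterval (fun t => ∑ j ∈ s, u j t) a b := by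
  classical
  induction s using Finset.induction_on with
  | empty => simpa only [Finset.sum_empty] using absolutelyContinuousOnInterval_const 0 a b
  | insert j s hj ih =>
    simp only [Finset.sum_insert hj]
    exact (h j (Finset.mem_insert_self j s)).add
      (ih fun k hk => h k (Finset.mem_insert_of_mem hk))

lemma absolutelyContinuousOnInterval_comp_of_lipschitz {X Y : Type*} [PseudoMetricSpace X]
    [PseudoMetricSpace Y] {γ : ℝ → X} {h : X → Y} {K c : NNReal} {a b : ℝ}
    (hγ : LipschitzOnWith K γ (Ici a)) (hh : LipschitzWith c h) (hab : a ≤ b) :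
    AbsolutelyContinuousOnInterval (fun t => h (γ t)) a b :=
  ((hh.comp_lipschitzOnWith hγ).mono <|
    (uIcc_of_le hab).trans_subset Icc_subset_Ici_self).absolutelyContinuousOnInterval

end AbsolutelyContinuous

section Barbalat

lemma tendsto_zero_of_uniformContinuousOn_of_integrableOn_norm_pow {E : Type*}
    [NormedAddCommGroup E] {φ : ℝ → E} {a : ℝ} {p : ℕ} (hφ : UniformContinuousOn φ (Ici a))
    (hint : IntegrableOn (fun t => ‖φ t‖ ^ p) (Ioi a)) : Tendsto φ atTop (𝓝 0) := by
  refine Metric.tendsto_nhds.2 fun ε hε => ?_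
  obtain ⟨δ, hδ, hφδ⟩ := Metric.uniformContinuousOn_iff_le.1 hφ (ε / 2) (half_pos hε)
  have htail : Tendsto (fun t => ∫ s in t..t + δ, ‖φ s‖ ^ p) atTop (𝓝 0) := by
    have hlim := intervalIntegral_tendsto_integral_Ioi a hint tendsto_id
    have hdiff := (hlim.comp (tendsto_atTop_add_const_right _ δ tendsto_id)).sub hlim
    rw [sub_self] at hdiff
    refine hdiff.congr' ?_
    filter_upwards [eventually_ge_atTop a] with t ht
    have hii (T : ℝ) (hT : a ≤ T) : IntervalIntegrable (fun s => ‖φ s‖ ^ p) volume a T :=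
      (intervalIntegrable_iff_integrableOn_Ioc_of_le hT).2 (hint.mono_set Ioc_subset_Ioi_self)
    exact intervalIntegral.integral_interval_sub_left (hii _ (by simp only [id]; linarith))
      (hii _ ht)
  filter_upwards [eventually_ge_atTop a,
    htail.eventually_lt_const (show 0 < δ * (ε / 2) ^ p by positivity)] with t ht hsmall
  rw [dist_zero_right]
  by_contra! hlarge
  have hle : ∀ s ∈ Icc t (t + δ), (ε / 2) ^ p ≤ ‖φ s‖ ^ p := by
    intro s hs
    have hclose : ‖φ t - φ s‖ ≤ ε / 2 := by
      rw [← dist_eq_norm]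
      refine hφδ t ht s (ht.trans hs.1) ?_
      rw [Real.dist_eq, abs_sub_comm, abs_of_nonneg (sub_nonneg.2 hs.1)]
      linarith [hs.2]
    have := norm_sub_norm_le (φ t) (φ s)
    exact pow_le_pow_left₀ (half_pos hε).le (by linarith) p
  have hmono : ∫ _ in t..t + δ, (ε / 2) ^ p ≤ ∫ s in t..t + δ, ‖φ s‖ ^ p :=
    intervalIntegral.integral_mono_on (by linarith) intervalIntegrable_const
      ((intervalIntegrable_iff_integrableOn_Ioc_of_le (by linarith)).2
        (hint.mono_set fun s hs => ht.trans_lt hs.1)) hle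
  rw [intervalIntegral.integral_const, add_sub_cancel_left, smul_eq_mul] at hmono
  exact hsmall.not_ge hmono

lemma integrableOn_Ioi_of_ae_deriv_le_neg {V φ : ℝ → ℝ} {a b : ℝ} (hVb : ∀ t ≥ a, b ≤ V t)
    (hV : ∀ T ≥ a, AbsolutelyContinuousOnInterval V a T) (hφ0 : ∀ t > a, 0 ≤ φ t)
    (hφ : ∀ T, IntegrableOn φ (Ioc a T)) (hderiv : ∀ᵐ t, a < t → deriv V t ≤ -φ t) :
    IntegrableOn φ (Ioi a) := by
  refine integrableOn_Ioi_of_intervalIntegral_norm_bounded (V a - b) a hφ tendsto_id ?_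
  filter_upwards [eventually_ge_atTop a] with T hT
  have hle : ∫ t in a..T, ‖φ t‖ ≤ ∫ t in a..T, -deriv V t := by
    rw [intervalIntegral.integral_of_le hT, intervalIntegral.integral_of_le hT]
    refine setIntegral_mono_on_ae (hφ T).norm (hV T hT).intervalIntegrable_deriv.1.neg
      measurableSet_Ioc ?_
    filter_upwards [hderiv] with t ht htmem
    rw [Real.norm_of_nonneg (hφ0 t htmem.1)]
    linarith [ht htmem.1]
  rw [intervalIntegral.integral_neg, (hV T hT).integral_deriv_eq_sub] at hle
  exact hle.trans (by linarith [hVb T hT])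

lemma tendsto_of_ae_deriv_le_neg_mul_norm_pow {E : Type*} [NormedAddCommGroup E] {x : ℝ → E}
    {x₀ : E} {V : ℝ → ℝ} {a b c : ℝ} {p : ℕ} (hc : 0 < c) (hx : UniformContinuousOn x (Ici a))
    (hVb : ∀ t ≥ a, b ≤ V t) (hV : ∀ T ≥ a, AbsolutelyContinuousOnInterval V a T)
    (hderiv : ∀ᵐ t, a < t → deriv V t ≤ -(c * ‖x t - x₀‖ ^ p)) : Tendsto x atTop (𝓝 x₀) := by
  have hsub : UniformContinuousOn (fun t => x t - x₀) (Ici a) :=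
    (uniformContinuous_id.sub uniformContinuous_const).comp_uniformContinuousOn hx
  have hcont : ContinuousOn (fun t => c * ‖x t - x₀‖ ^ p) (Ici a) :=
    (hsub.continuousOn.norm.pow p).const_mul c
  have hint : IntegrableOn (fun t => c * ‖x t - x₀‖ ^ p) (Ioi a) :=
    integrableOn_Ioi_of_ae_deriv_le_neg hVb hV (fun t _ => by positivity)
      (fun T => ((hcont.mono Icc_subset_Ici_self).integrableOn_Icc).mono_set Ioc_subset_Icc_self)
      hderiv
  exact tendsto_sub_nhds_zero_iff.1 <|
    tendsto_zero_of_uniformContinuousOn_of_integrableOn_norm_pow hsub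
      ((integrable_const_mul_iff hc.ne'.isUnit _).1 hint)

end Barbalat

section Circuit

variable {ι κ σ : Type*} {𝕜 : Type*} [CommRing 𝕜]

/-- Kirchhoff's laws for a network with reduced incidence matrix `A`: the branch currents `i` sum to
`-y` at the terminals `ι` and to zero at the internal nodes `κ`, and the branch voltages `v` are
potential differences, for potentials `x` at the terminals and some `e` at the internal nodes. -/
def IsKirchhoff [Fintype ι] [Fintype κ] [Fintype σ] (A : Matrix (ι ⊕ κ) σ 𝕜) (x y : ι → 𝕜)
    (v i : σ → 𝕜) : Prop :=
  A *ᵥ i = Sum.elim (fun a => -y a) (fun _ => 0) ∧ ∃ e : κ → 𝕜, v = Aᵀ *ᵥ Sum.elim x e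

namespace IsKirchhoff

variable [Fintype ι] [Fintype κ] [Fintype σ] {A : Matrix (ι ⊕ κ) σ 𝕜}

lemma sub {x x' y y' : ι → 𝕜} {v v' i i' : σ → 𝕜} (h : IsKirchhoff A x y v i)
    (h' : IsKirchhoff A x' y' v' i') :
    IsKirchhoff A (x - x') (y - y') (v - v') (i - i') := by
  obtain ⟨hi, e, rfl⟩ := h
  obtain ⟨hi', e', rfl⟩ := h'
  refine ⟨?_, e - e', ?_⟩
  · rw [Matrix.mulVec_sub, hi, hi']
    ext (a | a) <;> simp [neg_add_eq_sub]
  · rw [← Matrix.mulVec_sub]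
    congr 1
    ext (a | a) <;> simp

lemma tellegen {x y : ι → 𝕜} {v i : σ → 𝕜} (h : IsKirchhoff A x y v i) :
    v ⬝ᵥ i = -(x ⬝ᵥ y) := by
  obtain ⟨hi, e, rfl⟩ := h
  rw [Matrix.mulVec_transpose, ← Matrix.dotProduct_mulVec, hi]
  simp [dotProduct]

variable [LinearOrder 𝕜] [IsStrictOrderedRing 𝕜] [DecidableEq σ]

lemma reactive_power_le {x y : ι → 𝕜} {v i : σ → 𝕜} (h : IsKirchhoff A x y v i)
    {R L C : Finset σ} (hRL : Disjoint R L) (hRC : Disjoint R C) (hLC : Disjoint L C)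
    (hcover : R ∪ L ∪ C = Finset.univ) {dR : σ → 𝕜} (hdR : ∀ j ∈ R, 0 ≤ dR j)
    (hR : ∀ j ∈ R, v j = dR j * i j) :
    ∑ j ∈ L, v j * i j + ∑ j ∈ C, v j * i j ≤ -(x ⬝ᵥ y) := by
  have hdissipated : 0 ≤ ∑ j ∈ R, v j * i j := Finset.sum_nonneg fun j hj => by
    rw [hR j hj, mul_assoc]
    exact mul_nonneg (hdR j hj) (mul_self_nonneg (i j))
  have hsplit : v ⬝ᵥ i = ∑ j ∈ R, v j * i j + ∑ j ∈ L, v j * i j + ∑ j ∈ C, v j * i j := by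
    rw [dotProduct, ← hcover, Finset.sum_union (Finset.disjoint_union_left.2 ⟨hRC, hLC⟩),
      Finset.sum_union hRL]
  linarith [h.tellegen]

end IsKirchhoff

/-- The energy stored in the inductors `L` and the capacitors `C`, with inductances `dL` and
capacitances `dC`, of a circuit with voltages `v` and currents `i`. -/
noncomputable def storedEnergy (L C : Finset σ) (dL dC v i : σ → ℝ) : ℝ :=
  ∑ j ∈ L, dL j / 2 * i j ^ 2 + ∑ j ∈ C, dC j / 2 * v j ^ 2

variable {L C : Finset σ} {dL dC : σ → ℝ}

lemma storedEnergy_nonneg (hdL : ∀ j ∈ L, 0 ≤ dL j) (hdC : ∀ j ∈ C, 0 ≤ dC j) (v i : σ → ℝ) :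
    0 ≤ storedEnergy L C dL dC v i :=
  add_nonneg
    (Finset.sum_nonneg fun j hj => mul_nonneg (div_nonneg (hdL j hj) zero_le_two) (sq_nonneg (i j)))
    (Finset.sum_nonneg fun j hj => mul_nonneg (div_nonneg (hdC j hj) zero_le_two) (sq_nonneg (v j)))

lemma hasDerivAt_half_mul_sq {u : ℝ → ℝ} {d w t : ℝ} (hd : d ≠ 0)
    (hu : HasDerivAt u (d⁻¹ * w) t) : HasDerivAt (fun s => d / 2 * u s ^ 2) (w * u t) t := by
  refine ((hu.fun_pow 2).const_mul (d / 2)).congr_deriv ?_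
  field_simp
  ring

lemma hasDerivAt_storedEnergy (hdL : ∀ j ∈ L, dL j ≠ 0) (hdC : ∀ j ∈ C, dC j ≠ 0)
    {v i : ℝ → σ → ℝ} {t : ℝ} (hi : ∀ j ∈ L, HasDerivAt (fun s => i s j) ((dL j)⁻¹ * v t j) t)
    (hv : ∀ j ∈ C, HasDerivAt (fun s => v s j) ((dC j)⁻¹ * i t j) t) :
    HasDerivAt (fun s => storedEnergy L C dL dC (v s) (i s))
      (∑ j ∈ L, v t j * i t j + ∑ j ∈ C, v t j * i t j) t := by
  refine HasDerivAt.add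
    (HasDerivAt.fun_sum fun j hj => hasDerivAt_half_mul_sq (hdL j hj) (hi j hj))
    (HasDerivAt.fun_sum fun j hj => ?_)
  rw [mul_comm]
  exact hasDerivAt_half_mul_sq (hdC j hj) (hv j hj)

lemma absolutelyContinuousOnInterval_storedEnergy_sub {v i : ℝ → σ → ℝ} {a b : ℝ}
    (hi : ∀ j ∈ L, AbsolutelyContinuousOnInterval (fun t => i t j) a b)
    (hv : ∀ j ∈ C, AbsolutelyContinuousOnInterval (fun t => v t j) a b) (v₀ i₀ : σ → ℝ) :
    AbsolutelyContinuousOnInterval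
      (fun t => storedEnergy L C dL dC (v t - v₀) (i t - i₀)) a b := by
  have hsq {u : ℝ → ℝ} (hu : AbsolutelyContinuousOnInterval u a b) (d u₀ : ℝ) :
      AbsolutelyContinuousOnInterval (fun t => d / 2 * (u t - u₀) ^ 2) a b := by
    have hsub := hu.sub (absolutelyContinuousOnInterval_const u₀ a b)
    simp only [sq]
    exact (hsub.mul hsub).const_mul (d / 2)
  exact (absolutelyContinuousOnInterval_finset_sum fun j hj => hsq (hi j hj) (dL j) (i₀ j)).add
    (absolutelyContinuousOnInterval_finset_sum fun j hj => hsq (hv j hj) (dC j) (v₀ j))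

end Circuit

theorem circuit_flow_convergence_general {m p σ : ℕ} {μ : ℝ} (hμ : 0 < μ)
    {g : (Fin m → ℝ) → Fin m → ℝ} {xstar : Fin m → ℝ}
    (hmono : ∀ z, μ * ((z - xstar) ⬝ᵥ (z - xstar)) ≤ (z - xstar) ⬝ᵥ (g z - g xstar))
    (hg : ContinuousAt g xstar)
    {A : Matrix (Fin m ⊕ Fin p) (Fin σ) ℝ} {Rset Lset Cset : Finset (Fin σ)}
    (hRL : Disjoint Rset Lset) (hRC : Disjoint Rset Cset) (hLC : Disjoint Lset Cset)
    (hcover : Rset ∪ Lset ∪ Cset = Finset.univ) {dR dL dC : Fin σ → ℝ}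
    (hdR : ∀ j ∈ Rset, 0 ≤ dR j) (hdL : ∀ j ∈ Lset, 0 < dL j) (hdC : ∀ j ∈ Cset, 0 < dC j)
    (hequil : ∃ vstar istar, MemDxy A Rset Lset Cset dR xstar (g xstar) vstar istar)
    {v i : ℝ → Fin σ → ℝ} {x y : ℝ → Fin m → ℝ}
    (hi : ∀ j ∈ Lset, ∀ T ≥ 0, AbsolutelyContinuousOnInterval (fun t => i t j) 0 T)
    (hv : ∀ j ∈ Cset, ∀ T ≥ 0, AbsolutelyContinuousOnInterval (fun t => v t j) 0 T)
    (hx : UniformContinuousOn x (Ici 0))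
    (hstatic : ∀ t ≥ (0 : ℝ),
      y t = g (x t) ∧
      A *ᵥ i t = Sum.elim (fun a => -(y t a)) (fun _ => (0 : ℝ)) ∧
      (∃ e : Fin p → ℝ, v t = Aᵀ *ᵥ Sum.elim (x t) e) ∧
      (∀ j ∈ Rset, v t j = dR j * i t j))
    (hdyn : ∀ᵐ t, 0 < t →
      (∀ j ∈ Lset, HasDerivAt (fun s => i s j) ((dL j)⁻¹ * v t j) t) ∧
      (∀ j ∈ Cset, HasDerivAt (fun s => v s j) ((dC j)⁻¹ * i t j) t)) :
    Tendsto x atTop (𝓝 xstar) ∧ Tendsto y atTop (𝓝 (g xstar)) := by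
  obtain ⟨vstar, istar, ⟨estar, hAstar, hvstar⟩, hRstar, hLstar, hCstar⟩ := hequil
  have hpower (t : ℝ) (ht : 0 ≤ t) :
      ∑ j ∈ Lset, (v t - vstar) j * (i t - istar) j +
        ∑ j ∈ Cset, (v t - vstar) j * (i t - istar) j ≤ -(μ * ‖x t - xstar‖ ^ 2) := by
    obtain ⟨hy, hA, hvA, hR⟩ := hstatic t ht
    have hkirchhoff : IsKirchhoff A (x t - xstar) (y t - g xstar) (v t - vstar) (i t - istar) :=
      IsKirchhoff.sub ⟨hA, hvA⟩ ⟨hAstar, estar, hvstar⟩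
    have hstored := hkirchhoff.reactive_power_le hRL hRC hLC hcover hdR fun j hj => by
      rw [Pi.sub_apply, Pi.sub_apply, hR j hj, hRstar j hj, mul_sub]
    rw [hy] at hstored
    linarith [hmono (x t),
      mul_le_mul_of_nonneg_left (norm_sq_le_dotProduct_self (x t - xstar)) hμ.le]
  have hdecay : ∀ᵐ t, 0 < t → deriv (fun s => storedEnergy Lset Cset dL dC (v s - vstar)
      (i s - istar)) t ≤ -(μ * ‖x t - xstar‖ ^ 2) := by
    filter_upwards [hdyn] with t h ht
    obtain ⟨hiL, hvC⟩ := h ht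
    refine (hasDerivAt_storedEnergy (fun j hj => (hdL j hj).ne') (fun j hj => (hdC j hj).ne')
      (fun j hj => ?_) (fun j hj => ?_)).deriv.trans_le (hpower t ht.le)
    · simpa only [Pi.sub_apply, hLstar j hj, sub_zero] using (hiL j hj).sub_const (istar j)
    · simpa only [Pi.sub_apply, hCstar j hj, sub_zero] using (hvC j hj).sub_const (vstar j)
  have hxlim : Tendsto x atTop (𝓝 xstar) := tendsto_of_ae_deriv_le_neg_mul_norm_pow hμ hx
    (fun t _ => storedEnergy_nonneg (fun j hj => (hdL j hj).le) (fun j hj => (hdC j hj).le) _ _)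
    (fun T hT => absolutelyContinuousOnInterval_storedEnergy_sub (fun j hj => hi j hj T hT)
      (fun j hj => hv j hj T hT) vstar istar) hdecay
  refine ⟨hxlim, (hg.tendsto.comp hxlim).congr' ?_⟩
  filter_upwards [eventually_ge_atTop 0] with t ht using (hstatic t ht).1.symm

/-- **Continuous-time convergence of the circuit flow to a primal–dual solution
(Theorem 2).**  Along any Lipschitz solution curve of an admissible dynamic
interconnect composed with `∇f` (`f` strongly convex and smooth),
`x(t) → x⋆` and `y(t) → y⋆`. -/
theorem circuit_flow_convergence {m p σ n : ℕ} (μ M : ℝ)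
    (hμ : 0 < μ) (hμM : μ ≤ M)
    (f : (Fin m → ℝ) → ℝ) (g : (Fin m → ℝ) → Fin m → ℝ)
    (hgrad : HasGradient f g)
    (hsc : StronglyConvexFun μ f) (hsm : GradLipschitz M g)
    (A : Matrix (Fin m ⊕ Fin p) (Fin σ) ℝ)
    (Rset Lset Cset : Finset (Fin σ))
    (hRL : Disjoint Rset Lset) (hRC : Disjoint Rset Cset) (hLC : Disjoint Lset Cset)
    (hcover : Rset ∪ Lset ∪ Cset = Finset.univ)
    (dR dL dC : Fin σ → ℝ)
    (hdR : ∀ j ∈ Rset, 0 < dR j) (hdL : ∀ j ∈ Lset, 0 < dL j)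
    (hdC : ∀ j ∈ Cset, 0 < dC j)
    (E : Matrix (Fin n) (Fin m) ℝ) (hE : IsSelectionMatrix E)
    (hadm : AdmissibleInterconnect A Rset Lset Cset dR E)
    -- the primal–dual solution pair
    (xstar ystar : Fin m → ℝ)
    (hystar : ystar = g xstar)
    (hprim : ∃ z : Fin n → ℝ, xstar = E.transpose.mulVec z)
    (hdual : E.mulVec ystar = 0)
    -- the solution curve
    (v i : ℝ → Fin σ → ℝ) (x y : ℝ → Fin m → ℝ)
    (hlip : ∃ K : NNReal, LipschitzOnWith K (fun t => (v t, i t, x t, y t)) (Set.Ici 0))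
    (hstatic : ∀ t ≥ (0 : ℝ),
      y t = g (x t) ∧
      A.mulVec (i t) = Sum.elim (fun a => -(y t a)) (fun _ => (0 : ℝ)) ∧
      (∃ e : Fin p → ℝ, v t = A.transpose.mulVec (Sum.elim (x t) e)) ∧
      (∀ j ∈ Rset, v t j = dR j * i t j))
    (hdyn : ∀ᵐ t ∂(volume : Measure ℝ), 0 < t →
      (∀ j ∈ Lset, HasDerivAt (fun s => i s j) ((dL j)⁻¹ * v t j) t) ∧
      (∀ j ∈ Cset, HasDerivAt (fun s => v s j) ((dC j)⁻¹ * i t j) t)) :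
    Filter.Tendsto x Filter.atTop (nhds xstar) ∧
    Filter.Tendsto y Filter.atTop (nhds ystar) := by
  obtain ⟨K, hK⟩ := hlip
  subst hystar
  exact circuit_flow_convergence_general hμ (fun z => hgrad.mul_dotProduct_sub_le hsc z xstar)
    hsm.continuous.continuousAt hRL hRC hLC hcover (fun j hj => (hdR j hj).le) hdL hdC
    ((hadm _ _).2 ⟨hprim, hdual⟩)
    (fun j _ _ => absolutelyContinuousOnInterval_comp_of_lipschitz hK <|
      (LipschitzWith.eval j).comp (LipschitzWith.prod_fst.comp LipschitzWith.prod_snd))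
    (fun j _ _ => absolutelyContinuousOnInterval_comp_of_lipschitz hK <|
      (LipschitzWith.eval j).comp LipschitzWith.prod_fst)
    (uniformContinuous_fst.comp_uniformContinuousOn <|
      uniformContinuous_snd.comp_uniformContinuousOn <|
      uniformContinuous_snd.comp_uniformContinuousOn hK.uniformContinuousOn)
    hstatic hdyn
end

section
/- Equilibria of the circuit yield primal–dual solutions (Theorem C.2, second part). Let f: ℝ^m → ℝ ∪ {∞} be convex, A ∈ ℝ^{(τ−1)×σ} (τ ≥ m+1), {1,…,σ} partitioned into ℛ, ℒ, 𝒞, and D_ℛ, D_ℒ, D_𝒞 diagonal with strictly positive diagonal entries; assume the dynamic interconnect is admissible with respect to a selection matrix E ∈ ℝ^{n×m}. If y ∈ ∂f(x) and ((v_ℛ, v_ℒ, v_𝒞), (i_ℛ, i_ℒ, i_𝒞)) ∈ D_{x,y}, then v_ℛ = 0, i_ℛ = 0, and (x, y) is a primal–dual solution pair: x ∈ ℛ(Eᵀ), y ∈ 𝒩(E), and y ∈ ∂f(x); in particular x minimizes f over ℛ(Eᵀ). -/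
open Matrix

/-- `y` is a subgradient of the extended-real-valued `f` at `x`:
`f(z) ≥ f(x) + ⟨y, z − x⟩` for all `z`. -/
def ESubgradAt {m : ℕ} (f : (Fin m → ℝ) → EReal) (y x : Fin m → ℝ) : Prop :=
  ∀ z : Fin m → ℝ, f x + ((y ⬝ᵥ (z - x) : ℝ) : EReal) ≤ f z

/-- Convexity of an extended-real-valued function. -/
def EConvex {m : ℕ} (f : (Fin m → ℝ) → EReal) : Prop :=
  ∀ x z : Fin m → ℝ, ∀ a b : ℝ, 0 ≤ a → 0 ≤ b → a + b = 1 →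
    f (a • x + b • z) ≤ (a : EReal) * f x + (b : EReal) * f z

/-!
Admissibility puts `x` in the range of `Eᵀ` and `y` in the kernel of `E`, so `x ⟂ y`. By Tellegen's
theorem the power `v ⬝ᵥ i` absorbed by the circuit equals `-(x ⬝ᵥ y) = 0`. At an equilibrium the
inductors and capacitors absorb no power, so this is the total dissipation of the resistors, a
sum of nonnegative terms, all of which must vanish. Since `y` is orthogonal to the whole range of
`Eᵀ`, the linear term of the subgradient inequality drops out there and `x` is a minimizer.
-/

theorem dotProduct_transpose_mulVec_eq_zero {R m n : Type*} [NonUnitalCommSemiring R]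
    [Fintype m] [Fintype n] {E : Matrix n m R} {y : m → R} (hy : E *ᵥ y = 0) (z : n → R) :
    y ⬝ᵥ Eᵀ *ᵥ z = 0 := by
  rw [dotProduct_transpose_mulVec, hy, dotProduct_zero]

theorem transpose_mulVec_sumElim_dotProduct {R m p σ : Type*} [NonUnitalCommRing R]
    [Fintype m] [Fintype p] [Fintype σ] {A : Matrix (m ⊕ p) σ R} {y : m → R} {i : σ → R}
    (hi : A *ᵥ i = Sum.elim (-y) 0) (x : m → R) (e : p → R) :
    Aᵀ *ᵥ Sum.elim x e ⬝ᵥ i = -(x ⬝ᵥ y) := by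
  rw [mulVec_transpose, ← dotProduct_mulVec, hi, sumElim_dotProduct_sumElim, dotProduct_neg,
    dotProduct_zero, add_zero]

theorem ESubgradAt.le_of_dotProduct_sub_eq_zero {m : ℕ} {f : (Fin m → ℝ) → EReal}
    {x y z : Fin m → ℝ} (hsub : ESubgradAt f y x) (hz : y ⬝ᵥ (z - x) = 0) : f x ≤ f z := by
  simpa [hz] using hsub z

namespace MemDxy

variable {m p σ : ℕ} {A : Matrix (Fin m ⊕ Fin p) (Fin σ) ℝ} {Rset Lset Cset : Finset (Fin σ)}
  {dR : Fin σ → ℝ} {x y : Fin m → ℝ} {v i : Fin σ → ℝ}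

theorem dotProduct_eq_neg (hD : MemDxy A Rset Lset Cset dR x y v i) :
    v ⬝ᵥ i = -(x ⬝ᵥ y) := by
  obtain ⟨⟨e, hi, rfl⟩, -⟩ := hD
  exact transpose_mulVec_sumElim_dotProduct hi x e

theorem dotProduct_eq_sum_resistors (hD : MemDxy A Rset Lset Cset dR x y v i)
    (hcover : Rset ∪ Lset ∪ Cset = Finset.univ) :
    v ⬝ᵥ i = ∑ j ∈ Rset, dR j * i j ^ 2 := by
  obtain ⟨-, hR, hL, hC⟩ := hD
  have reactive_power_eq_zero : ∀ j ∉ Rset, v j * i j = 0 := by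
    intro j hj
    have hjLC : j ∈ Lset ∨ j ∈ Cset := by
      simpa [hj] using hcover.ge (Finset.mem_univ j)
    rcases hjLC with hjL | hjC
    · rw [hL j hjL, zero_mul]
    · rw [hC j hjC, mul_zero]
  calc v ⬝ᵥ i = ∑ j ∈ Rset, v j * i j :=
        (Finset.sum_subset Rset.subset_univ fun j _ hj => reactive_power_eq_zero j hj).symm
    _ = ∑ j ∈ Rset, dR j * i j ^ 2 :=
        Finset.sum_congr rfl fun j hj => by rw [hR j hj]; ring

theorem resistors_eq_zero (hD : MemDxy A Rset Lset Cset dR x y v i)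
    (hcover : Rset ∪ Lset ∪ Cset = Finset.univ) (hdR : ∀ j ∈ Rset, 0 < dR j)
    (hxy : x ⬝ᵥ y = 0) : ∀ j ∈ Rset, v j = 0 ∧ i j = 0 := by
  have dissipation_eq_zero : ∑ j ∈ Rset, dR j * i j ^ 2 = 0 := by
    rw [← hD.dotProduct_eq_sum_resistors hcover, hD.dotProduct_eq_neg, hxy, neg_zero]
  have dissipation_nonneg : ∀ j ∈ Rset, 0 ≤ dR j * i j ^ 2 := fun j hj =>
    mul_nonneg (hdR j hj).le (sq_nonneg _)
  intro j hj
  have hij : i j = 0 := by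
    simpa [(hdR j hj).ne'] using
      (Finset.sum_eq_zero_iff_of_nonneg dissipation_nonneg).1 dissipation_eq_zero j hj
  exact ⟨by rw [hD.2.1 j hj, hij, mul_zero], hij⟩

end MemDxy

theorem equilibrium_yields_solution_general {m p σ n : ℕ}
    (f : (Fin m → ℝ) → EReal)
    (A : Matrix (Fin m ⊕ Fin p) (Fin σ) ℝ)
    (Rset Lset Cset : Finset (Fin σ))
    (hcover : Rset ∪ Lset ∪ Cset = Finset.univ)
    (dR : Fin σ → ℝ) (hdR : ∀ j ∈ Rset, 0 < dR j)
    (E : Matrix (Fin n) (Fin m) ℝ)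
    (hadm : AdmissibleInterconnect A Rset Lset Cset dR E)
    (x y : Fin m → ℝ) (v i : Fin σ → ℝ)
    (hsub : ESubgradAt f y x)
    (hD : MemDxy A Rset Lset Cset dR x y v i) :
    (∀ j ∈ Rset, v j = 0 ∧ i j = 0) ∧
    (∃ z : Fin n → ℝ, x = E.transpose.mulVec z) ∧
    E.mulVec y = 0 ∧
    ESubgradAt f y x ∧
    (∀ x' : Fin m → ℝ, (∃ z : Fin n → ℝ, x' = E.transpose.mulVec z) → f x ≤ f x') := by
  obtain ⟨⟨z, rfl⟩, hy⟩ := (hadm x y).1 ⟨v, i, hD⟩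
  have y_perp_range := dotProduct_transpose_mulVec_eq_zero hy
  refine ⟨hD.resistors_eq_zero hcover hdR ?_, ⟨z, rfl⟩, hy, hsub, ?_⟩
  · rw [dotProduct_comm, y_perp_range]
  · rintro _ ⟨w, rfl⟩
    apply hsub.le_of_dotProduct_sub_eq_zero
    rw [← mulVec_sub, y_perp_range]

/-- **Equilibria of the circuit yield primal–dual solutions
(Theorem C.2, second part).**  If `y ∈ ∂f(x)` and `(v, i) ∈ D_{x,y}` then
`v_ℛ = 0`, `i_ℛ = 0`, and `(x, y)` is a primal–dual solution pair; in
particular `x` minimizes `f` over `ℛ(Eᵀ)`. -/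
theorem equilibrium_yields_solution {m p σ n : ℕ}
    (f : (Fin m → ℝ) → EReal) (hconv : EConvex f) (hnb : ∀ x, f x ≠ ⊥)
    (A : Matrix (Fin m ⊕ Fin p) (Fin σ) ℝ)
    (Rset Lset Cset : Finset (Fin σ))
    (hRL : Disjoint Rset Lset) (hRC : Disjoint Rset Cset) (hLC : Disjoint Lset Cset)
    (hcover : Rset ∪ Lset ∪ Cset = Finset.univ)
    (dR dL dC : Fin σ → ℝ)
    (hdR : ∀ j ∈ Rset, 0 < dR j) (hdL : ∀ j ∈ Lset, 0 < dL j)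
    (hdC : ∀ j ∈ Cset, 0 < dC j)
    (E : Matrix (Fin n) (Fin m) ℝ) (hE : IsSelectionMatrix E)
    (hadm : AdmissibleInterconnect A Rset Lset Cset dR E)
    (x y : Fin m → ℝ) (v i : Fin σ → ℝ)
    (hsub : ESubgradAt f y x)
    (hD : MemDxy A Rset Lset Cset dR x y v i) :
    (∀ j ∈ Rset, v j = 0 ∧ i j = 0) ∧
    (∃ z : Fin n → ℝ, x = E.transpose.mulVec z) ∧
    E.mulVec y = 0 ∧
    ESubgradAt f y x ∧
    (∀ x' : Fin m → ℝ, (∃ z : Fin n → ℝ, x' = E.transpose.mulVec z) → f x ≤ f x') := by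
  exact equilibrium_yields_solution_general f A Rset Lset Cset hcover dR hdR E hadm x y v i hsub hD
end
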